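/- Let n, m ≥ 2 be integers and let D be the whirlpool orientation of the grid P_n □ P_m. Then D is strongly connected and con(D) = 1, i.e., every convex set of D other than V(D) itself is a single vertex. -/

import Mathlib

/-!  Common definitions: oriented graphs, geodesic convexity, convexity number,
strong convexity spectrum, and grid graphs. -/

variable {V : Type*}

/-- A directed walk of length `k` from `u` to `v` along the arc relation `A`,
encoded by the function `f` listing its vertices. -/
def IsDirWalk (A : V → V → Prop) (k : ℕ) (f : ℕ → V) (u v : V) : Prop :=
  f 0 = u ∧ f k = v ∧ ∀ i, i < k → A (f i) (f (i + 1))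

/-- There is a directed walk from `u` to `v`. -/
def DirReachable (A : V → V → Prop) (u v : V) : Prop :=
  ∃ k f, IsDirWalk A k f u v

/-- A digraph (given by its arc relation) is strongly connected. -/
def StrongConnected (A : V → V → Prop) : Prop :=
  ∀ u v : V, DirReachable A u v

/-- A `uv`-geodesic: a directed walk from `u` to `v` of minimum possible length
(such a walk is automatically a directed path). -/
def IsGeodesic (A : V → V → Prop) (k : ℕ) (f : ℕ → V) (u v : V) : Prop :=
  IsDirWalk A k f u v ∧ ∀ k' f', IsDirWalk A k' f' u v → k ≤ k'

/-- A nonempty vertex set `C` is convex if every vertex lying on a geodesic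
between two vertices of `C` (in either direction) belongs to `C`. -/
def DConvex (A : V → V → Prop) (C : Set V) : Prop :=
  C.Nonempty ∧ ∀ u ∈ C, ∀ v ∈ C, ∀ k f, IsGeodesic A k f u v → ∀ i ≤ k, f i ∈ C

/-- `A` is an orientation of the simple graph `G`: every arc is along an edge,
every edge gets an arc, and no edge gets both directions. -/
def IsOrientation (G : SimpleGraph V) (A : V → V → Prop) : Prop :=
  (∀ x y, A x y → G.Adj x y) ∧ (∀ x y, G.Adj x y → A x y ∨ A y x) ∧
    (∀ x y, A x y → ¬ A y x)

/-- The convexity number of a digraph: the maximum cardinality of a proper convex set. -/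
noncomputable def convexityNumber [Fintype V] (A : V → V → Prop) : ℕ :=
  sSup {k | ∃ C : Set V, DConvex A C ∧ C ≠ Set.univ ∧ C.ncard = k}

/-- The strong convexity spectrum of a graph: the set of convexity numbers of
its strongly connected orientations. -/
def strongConvexitySpectrum [Fintype V] (G : SimpleGraph V) : Set ℕ :=
  {k | ∃ A : V → V → Prop, IsOrientation G A ∧ StrongConnected A ∧ convexityNumber A = k}

/-- The grid graph `P_n □ P_m`. -/
def gridGraph (n m : ℕ) : SimpleGraph (Fin n × Fin m) :=
  (SimpleGraph.pathGraph n).boxProd (SimpleGraph.pathGraph m)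
/-- The whirlpool orientation of the grid `P_n □ P_m`: the edge
`{(i,j),(i,j+1)}` is oriented `(i,j)→(i,j+1)` iff `i ≡ j (mod 2)`, and the edge
`{(i,j),(i+1,j)}` is oriented `(i+1,j)→(i,j)` iff `i ≡ j (mod 2)`. -/
def whirlpoolAdj (n m : ℕ) (p q : Fin n × Fin m) : Prop :=
  (p.1 = q.1 ∧ ((q.2.val = p.2.val + 1 ∧ p.1.val % 2 = p.2.val % 2) ∨
                (p.2.val = q.2.val + 1 ∧ p.1.val % 2 ≠ q.2.val % 2))) ∨
  (p.2 = q.2 ∧ ((p.1.val = q.1.val + 1 ∧ q.1.val % 2 = p.2.val % 2) ∨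
                (q.1.val = p.1.val + 1 ∧ p.1.val % 2 ≠ p.2.val % 2)))

/-!
In the whirlpool orientation the horizontal arcs leave the vertices of even coordinate sum and the
vertical arcs leave the others, so every unit square is a directed 4-cycle. This alone is what
matters, in any box product. The endpoints of an edge reach each other inside a square, so
connectedness becomes strong connectedness. Parallel sides of a square carry opposite arcs, so both
factors, and hence the product, are bipartite; as there are no triangles, any three consecutive arcs
of a square form a geodesic. A convex set containing one side of a square therefore contains the
whole square, and passing to squares with a common side it grows to the whole product. Finally, a
convex set with two vertices contains an arc, namely the first one of a geodesic between them.
-/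

open Set SimpleGraph

section Digraph

variable {A : V → V → Prop} {G : SimpleGraph V} {C : Set V} {p q r s u v w : V}

theorem IsDirWalk.tail {k : ℕ} {f : ℕ → V} (hf : IsDirWalk A k f u v) (hvw : A v w) :
    IsDirWalk A (k + 1) (Function.update f (k + 1) w) u w := by
  obtain ⟨hf₀, hfk, hstep⟩ := hf
  refine ⟨by simp [hf₀], by simp, fun i hi ↦ ?_⟩
  rcases Nat.lt_succ_iff_lt_or_eq.1 hi with hi | rfl
  · simpa [Function.update, hi.ne, (hi.trans (Nat.lt_succ_self k)).ne] using hstep i hi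
  · simpa [hfk] using hvw

theorem dirReachable_iff_reflTransGen : DirReachable A u v ↔ Relation.ReflTransGen A u v := by
  constructor
  · rintro ⟨k, f, rfl, rfl, hstep⟩
    exact Relation.ReflTransGen.lift f (fun _ _ h ↦ h) _ _ (reflTransGen_of_succ_of_le
      (fun i j ↦ A (f i) (f j)) (fun i hi ↦ hstep i hi.2) (Nat.zero_le k))
  · intro h
    induction h with
    | refl => exact ⟨0, fun _ ↦ u, rfl, rfl, by simp⟩
    | tail _ hvw ih =>
      obtain ⟨k, f, hf⟩ := ih
      exact ⟨k + 1, _, hf.tail hvw⟩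

theorem strongConnected_of_adj (hG : G.Preconnected)
    (hA : ∀ x y, G.Adj x y → DirReachable A x y) : StrongConnected A := by
  simp only [StrongConnected, dirReachable_iff_reflTransGen] at hA ⊢
  exact fun u v ↦ Relation.reflTransGen_closed hA _ _
    ((G.reachable_iff_reflTransGen u v).1 (hG u v))

theorem DirReachable.exists_isGeodesic (h : DirReachable A u v) : ∃ k f, IsGeodesic A k f u v := by
  classical
  obtain ⟨f, hf⟩ := Nat.find_spec h
  exact ⟨Nat.find h, f, hf, fun k f' hf' ↦ Nat.find_min' h ⟨f', hf'⟩⟩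

theorem DConvex.exists_arc (hC : DConvex A C) (hA : StrongConnected A) (hnt : C.Nontrivial) :
    ∃ u ∈ C, ∃ v ∈ C, A u v := by
  obtain ⟨u, hu, v, hv, huv⟩ := hnt
  obtain ⟨k, f, hf⟩ := (hA u v).exists_isGeodesic
  obtain ⟨hf₀, hfk, hstep⟩ := hf.1
  have hk : 0 < k := Nat.pos_of_ne_zero fun hk ↦ huv (by rw [← hf₀, ← hfk, hk])
  exact ⟨u, hu, f 1, hC.2 u hu v hv k f hf 1 hk, hf₀ ▸ hstep 0 hk⟩

theorem dConvex_singleton (A : V → V → Prop) (u : V) : DConvex A {u} := by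
  refine ⟨singleton_nonempty u, ?_⟩
  rintro _ rfl _ rfl k f ⟨⟨hf₀, -, -⟩, hmin⟩ i hi
  have hk : k ≤ 0 := hmin 0 (fun _ ↦ f 0) ⟨hf₀, hf₀, by simp⟩
  rwa [Nat.le_zero.1 (hi.trans hk)]

theorem convexityNumber_eq_one [Fintype V] [Nontrivial V]
    (hA : ∀ C, DConvex A C → C.Nontrivial → C = univ) : convexityNumber A = 1 := by
  have hcard : {k | ∃ C : Set V, DConvex A C ∧ C ≠ univ ∧ C.ncard = k} = {1} := by
    refine eq_singleton_iff_unique_mem.2 ⟨?_, ?_⟩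
    · obtain ⟨u, -⟩ := exists_pair_ne V
      exact ⟨{u}, dConvex_singleton A u, singleton_ne_univ u, ncard_singleton u⟩
    · rintro _ ⟨C, hC, hne, rfl⟩
      have hsub : C.Subsingleton := not_nontrivial_iff.1 fun hnt ↦ hne (hA C hC hnt)
      obtain ⟨u, rfl⟩ := exists_eq_singleton_iff_nonempty_subsingleton.2 ⟨hC.1, hsub⟩
      exact ncard_singleton u
  rw [convexityNumber, hcard, csSup_singleton]

/-- The vertices `p`, `q`, `r`, `s` form a closed directed walk `p → q → r → s → p`, the way a
square of a whirlpool is oriented. They are not required to be distinct. -/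
def IsDirSquare (A : V → V → Prop) (p q r s : V) : Prop :=
  A p q ∧ A q r ∧ A r s ∧ A s p

theorem IsDirSquare.rotate (h : IsDirSquare A p q r s) : IsDirSquare A q r s p :=
  ⟨h.2.1, h.2.2.1, h.2.2.2, h.1⟩

theorem IsDirSquare.isDirWalk (h : IsDirSquare A p q r s) :
    IsDirWalk A 3 (fun i ↦ [p, q, r].getD i s) p s := by
  refine ⟨rfl, rfl, fun i hi ↦ ?_⟩
  interval_cases i
  exacts [h.1, h.2.1, h.2.2.1]

theorem IsDirSquare.isGeodesic (h : IsDirSquare A p q r s) (hA : IsOrientation G A)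
    (hG : G.CliqueFree 3) : IsGeodesic A 3 (fun i ↦ [p, q, r].getD i s) p s := by
  obtain ⟨hadj, -, hasymm⟩ := hA
  have hsp : A s p := h.2.2.2
  refine ⟨h.isDirWalk, ?_⟩
  rintro k f ⟨rfl, rfl, hstep⟩
  by_contra! hk
  interval_cases k
  · exact (hadj _ _ hsp).ne rfl
  · exact hasymm _ _ hsp (hstep 0 one_pos)
  · classical
    have h₀₁ := hadj _ _ (hstep 0 two_pos)
    have h₁₂ := hadj _ _ (hstep 1 one_lt_two)
    exact hG _ (is3Clique_triple_iff.2 ⟨h₀₁, (hadj _ _ hsp).symm, h₁₂⟩)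

theorem DConvex.mem_iff_mem_of_isDirSquare (hC : DConvex A C) (hA : IsOrientation G A)
    (hG : G.CliqueFree 3) (h : IsDirSquare A p q r s) (hp : p ∈ C) : q ∈ C ↔ s ∈ C :=
  ⟨fun hq ↦ hC.2 q hq p hp 3 _ (h.rotate.isGeodesic hA hG) 2 (by simp),
    fun hs ↦ hC.2 p hp s hs 3 _ (h.isGeodesic hA hG) 1 (by simp)⟩

end Digraph

section BoxProd

variable {W : Type*} {G : SimpleGraph V} {H : SimpleGraph W} {A : V × W → V × W → Prop}
  {S : Set (V × W)}

theorem boxProd_mem_of_adj_of_adj (hG : ∀ a, ∃ a', G.Adj a a') (hH : ∀ b, ∃ b', H.Adj b b')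
    (hS : ∀ a a' b b', G.Adj a a' → H.Adj b b' → (a, b) ∈ S →
      ((a', b) ∈ S ↔ (a, b') ∈ S))
    {x y z : V × W} (hx : x ∈ S) (hy : y ∈ S) (hxy : (G □ H).Adj x y) (hxz : (G □ H).Adj x z) :
    z ∈ S := by
  obtain ⟨a, b⟩ := x
  have hboth : (∃ a', G.Adj a a' ∧ (a', b) ∈ S) ∧ ∃ b', H.Adj b b' ∧ (a, b') ∈ S := by
    rcases y with ⟨a', b'⟩
    rcases boxProd_adj.1 hxy with ⟨ha, rfl : b = b'⟩ | ⟨hb, rfl : a = a'⟩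
    · obtain ⟨b', hb⟩ := hH b
      exact ⟨⟨a', ha, hy⟩, b', hb, (hS a a' b b' ha hb hx).1 hy⟩
    · obtain ⟨a', ha⟩ := hG a
      exact ⟨⟨a', ha, (hS a a' b b' ha hb hx).2 hy⟩, b', hb, hy⟩
  obtain ⟨⟨a', ha, ha'S⟩, b', hb, hb'S⟩ := hboth
  rcases z with ⟨a'', b''⟩
  rcases boxProd_adj.1 hxz with ⟨ha', rfl : b = b''⟩ | ⟨hb', rfl : a = a''⟩
  · exact (hS a a'' b b' ha' hb hx).2 hb'S
  · exact (hS a a' b b'' ha hb' hx).1 ha'S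

theorem boxProd_eq_univ_of_adj [Nontrivial V] [Nontrivial W] (hG : G.Preconnected)
    (hH : H.Preconnected) (hS : ∀ a a' b b', G.Adj a a' → H.Adj b b' → (a, b) ∈ S →
      ((a', b) ∈ S ↔ (a, b') ∈ S))
    {x y : V × W} (hx : x ∈ S) (hy : y ∈ S) (hxy : (G □ H).Adj x y) : S = univ := by
  refine eq_univ_of_forall fun z ↦ ?_
  suffices z ∈ S ∧ ∃ z' ∈ S, (G □ H).Adj z z' from this.1
  induction (reachable_iff_reflTransGen x z).1 (hG.boxProd hH x z) with
  | refl => exact ⟨hx, y, hy, hxy⟩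
  | tail _ hvw ih =>
    obtain ⟨hv, v', hv', hvv'⟩ := ih
    exact ⟨boxProd_mem_of_adj_of_adj hG.exists_adj_of_nontrivial hH.exists_adj_of_nontrivial hS
      hv hv' hvv' hvw, _, hv, hvw.symm⟩

/-- Every square of the box product `G □ H` is a directed 4-cycle of `A`, in one of the two
senses of rotation. Strong connectedness and convexity number `1` rest on this property. -/
def CyclicOnSquares (G : SimpleGraph V) (H : SimpleGraph W) (A : V × W → V × W → Prop) : Prop :=
  ∀ a a' b b', G.Adj a a' → H.Adj b b' →
    IsDirSquare A (a, b) (a', b) (a', b') (a, b') ∨ IsDirSquare A (a, b) (a, b') (a', b') (a', b)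

namespace CyclicOnSquares

theorem dirReachable_of_adj (h : CyclicOnSquares G H A) (hG : ∀ a, ∃ a', G.Adj a a')
    (hH : ∀ b, ∃ b', H.Adj b b') {x y : V × W} (hxy : (G □ H).Adj x y) :
    DirReachable A x y := by
  have hsq : ∃ r s, IsDirSquare A x y r s ∨ IsDirSquare A x s r y := by
    rcases x with ⟨a, b⟩
    rcases y with ⟨a', b'⟩
    rcases boxProd_adj.1 hxy with ⟨ha, rfl : b = b'⟩ | ⟨hb, rfl : a = a'⟩
    · obtain ⟨b', hb⟩ := hH b
      exact ⟨_, _, h a a' b b' ha hb⟩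
    · obtain ⟨a', ha⟩ := hG a
      exact ⟨_, _, (h a a' b b' ha hb).symm⟩
  obtain ⟨r, s, hxyrs | hxsry⟩ := hsq
  · exact dirReachable_iff_reflTransGen.2 (.single hxyrs.1)
  · exact ⟨3, _, hxsry.isDirWalk⟩

theorem strongConnected [Nontrivial V] [Nontrivial W] (h : CyclicOnSquares G H A)
    (hG : G.Preconnected) (hH : H.Preconnected) : StrongConnected A :=
  strongConnected_of_adj (hG.boxProd hH) fun _ _ ↦
    h.dirReachable_of_adj hG.exists_adj_of_nontrivial hH.exists_adj_of_nontrivial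

theorem arc_iff_not_arc (h : CyclicOnSquares G H A) (hA : ∀ x y, A x y → ¬ A y x) {a a' : V}
    {b b' : W} (ha : G.Adj a a') (hb : H.Adj b b') :
    A (a, b) (a, b') ↔ ¬ A (a', b) (a', b') := by
  rcases h a a' b b' ha hb with ⟨-, h₂, -, h₄⟩ | ⟨h₁, -, h₃, -⟩
  · exact iff_of_false (hA _ _ h₄) (not_not_intro h₂)
  · exact iff_of_true h₁ (hA _ _ h₃)

theorem swap (h : CyclicOnSquares G H A) :
    CyclicOnSquares H G fun x y ↦ A x.swap y.swap :=
  fun b b' a a' hb ha ↦ (h a a' b b' ha hb).symm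

theorem colorable_two (h : CyclicOnSquares G H A) (hA : ∀ x y, A x y → ¬ A y x) {b b' : W}
    (hb : H.Adj b b') : G.Colorable 2 := by
  let c : G.Coloring Prop := Coloring.mk (fun a ↦ A (a, b) (a, b')) fun {a a'} ha heq ↦
    iff_not_self (heq.to_iff.symm.trans (h.arc_iff_not_arc hA ha hb))
  simpa using c.colorable

end CyclicOnSquares

theorem boxProd_colorable {k : ℕ} (hG : G.Colorable k) (hH : H.Colorable k) :
    (G □ H).Colorable k := by
  obtain ⟨c⟩ := hG
  obtain ⟨d⟩ := hH
  rcases eq_zero_or_neZero k with rfl | _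
  · exact ⟨Coloring.mk (fun x ↦ c x.1) fun {x} ↦ (c x.1).elim0⟩
  refine ⟨Coloring.mk (fun x ↦ c x.1 + d x.2) fun {x y} hxy ↦ ?_⟩
  rcases boxProd_adj.1 hxy with ⟨hx, hxy⟩ | ⟨hx, hxy⟩
  · simpa [hxy] using c.valid hx
  · simpa [hxy] using d.valid hx

namespace CyclicOnSquares

theorem cliqueFree_three (h : CyclicOnSquares G H A) (hA : ∀ x y, A x y → ¬ A y x) {a a' : V}
    {b b' : W} (ha : G.Adj a a') (hb : H.Adj b b') : (G □ H).CliqueFree 3 :=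
  (boxProd_colorable (h.colorable_two hA hb)
    (h.swap.colorable_two (fun _ _ ↦ hA _ _) ha)).cliqueFree (Nat.lt_succ_self 2)

theorem eq_univ_of_dConvex [Nontrivial V] [Nontrivial W] (h : CyclicOnSquares G H A)
    (hA : IsOrientation (G □ H) A) (hG : G.Preconnected) (hH : H.Preconnected) (hS : DConvex A S)
    (hnt : S.Nontrivial) : S = univ := by
  obtain ⟨u, hu, v, hv, huv⟩ := hS.exists_arc (h.strongConnected hG hH) hnt
  refine boxProd_eq_univ_of_adj hG hH (fun a a' b b' ha hb hab ↦ ?_) hu hv (hA.1 u v huv)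
  have hfree : (G □ H).CliqueFree 3 := h.cliqueFree_three hA.2.2 ha hb
  rcases h a a' b b' ha hb with hsq | hsq
  · exact hS.mem_iff_mem_of_isDirSquare hA hfree hsq hab
  · exact (hS.mem_iff_mem_of_isDirSquare hA hfree hsq hab).symm

end CyclicOnSquares

theorem whirlpool_strong_and_convexityNumber_one_general [Fintype V] [Fintype W] [Nontrivial V]
    [Nontrivial W] (hG : G.Preconnected) (hH : H.Preconnected) (hA : IsOrientation (G □ H) A)
    (h : CyclicOnSquares G H A) : StrongConnected A ∧ convexityNumber A = 1 :=
  ⟨h.strongConnected hG hH, convexityNumber_eq_one fun _ ↦ h.eq_univ_of_dConvex hA hG hH⟩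

end BoxProd

section Whirlpool

variable {n m : ℕ}

theorem mod_two_ne_of_pathGraph_adj {i i' : Fin n} (h : (pathGraph n).Adj i i') :
    i.val % 2 ≠ i'.val % 2 := by
  rw [pathGraph_adj] at h
  omega

theorem whirlpoolAdj_iff {p q : Fin n × Fin m} :
    whirlpoolAdj n m p q ↔
      p.1 = q.1 ∧ (pathGraph m).Adj p.2 q.2 ∧ p.1.val % 2 = p.2.val % 2 ∨
        p.2 = q.2 ∧ (pathGraph n).Adj p.1 q.1 ∧ p.1.val % 2 ≠ p.2.val % 2 := by
  simp only [whirlpoolAdj, pathGraph_adj, Fin.ext_iff]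
  omega

theorem whirlpoolAdj_row_iff {i : Fin n} {j j' : Fin m} (hj : (pathGraph m).Adj j j') :
    whirlpoolAdj n m (i, j) (i, j') ↔ i.val % 2 = j.val % 2 := by
  simp [whirlpoolAdj_iff, hj, hj.ne]

theorem whirlpoolAdj_column_iff {i i' : Fin n} {j : Fin m} (hi : (pathGraph n).Adj i i') :
    whirlpoolAdj n m (i, j) (i', j) ↔ i.val % 2 ≠ j.val % 2 := by
  simp [whirlpoolAdj_iff, hi, hi.ne]

theorem isOrientation_whirlpoolAdj (n m : ℕ) :
    IsOrientation (gridGraph n m) (whirlpoolAdj n m) := by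
  refine ⟨fun p q h ↦ ?_, ?_, ?_⟩
  · rw [whirlpoolAdj_iff] at h
    rw [gridGraph, boxProd_adj]
    tauto
  · rintro ⟨i, j⟩ ⟨i', j'⟩ h
    rcases boxProd_adj.1 h with ⟨hi, rfl : j = j'⟩ | ⟨hj, rfl : i = i'⟩
    · have := mod_two_ne_of_pathGraph_adj hi
      rw [whirlpoolAdj_column_iff hi, whirlpoolAdj_column_iff hi.symm]
      omega
    · have := mod_two_ne_of_pathGraph_adj hj
      rw [whirlpoolAdj_row_iff hj, whirlpoolAdj_row_iff hj.symm]
      omega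
  · rintro ⟨i, j⟩ ⟨i', j'⟩ h
    rcases whirlpoolAdj_iff.1 h with ⟨rfl : i = i', hj, -⟩ | ⟨rfl : j = j', hi, -⟩
    · have := mod_two_ne_of_pathGraph_adj hj
      rw [whirlpoolAdj_row_iff hj] at h
      rw [whirlpoolAdj_row_iff hj.symm]
      omega
    · have := mod_two_ne_of_pathGraph_adj hi
      rw [whirlpoolAdj_column_iff hi] at h
      rw [whirlpoolAdj_column_iff hi.symm]
      omega

theorem cyclicOnSquares_whirlpoolAdj (n m : ℕ) :
    CyclicOnSquares (pathGraph n) (pathGraph m) (whirlpoolAdj n m) := by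
  intro i i' j j' hi hj
  have hi_par := mod_two_ne_of_pathGraph_adj hi
  have hj_par := mod_two_ne_of_pathGraph_adj hj
  simp only [IsDirSquare, whirlpoolAdj_column_iff hi, whirlpoolAdj_column_iff hi.symm,
    whirlpoolAdj_row_iff hj, whirlpoolAdj_row_iff hj.symm]
  omega

end Whirlpool

/-- The whirlpool orientation of a grid is a strongly connected orientation with
convexity number `1`. -/
theorem whirlpool_strong_and_convexityNumber_one (n m : ℕ) (hn : 2 ≤ n) (hm : 2 ≤ m) :
    IsOrientation (gridGraph n m) (whirlpoolAdj n m) ∧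
    StrongConnected (whirlpoolAdj n m) ∧
    convexityNumber (whirlpoolAdj n m) = 1 := by
  have := Fin.nontrivial_iff_two_le.2 hn
  have := Fin.nontrivial_iff_two_le.2 hm
  exact ⟨isOrientation_whirlpoolAdj n m,
    whirlpool_strong_and_convexityNumber_one_general (pathGraph_preconnected n)
      (pathGraph_preconnected m) (isOrientation_whirlpoolAdj n m)
      (cyclicOnSquares_whirlpoolAdj n m)⟩
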